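/- arXiv:2110.03225 — 2 statements merged into one kernel-verified Lean document; each statement's English description precedes it below -/
import Mathlib

section
/- Let G be a finite simple graph on n ≥ 2 vertices and let α be a real number with 0 < α < 1. Then SO_α(G) ≥ F(G)^{α/2}, with equality if and only if G has at most one edge (i.e., G is the disjoint union of K_2 with n−2 isolated vertices, or G is the empty graph on n vertices). -/
open Finset

variable {V : Type*}

/-- The general Sombor index `SO_α(G) = ∑_{uv ∈ E(G)} (d(u)^2 + d(v)^2)^(α/2)`. -/
noncomputable def generalSombor [Fintype V] [DecidableEq V] (G : SimpleGraph V)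
    [DecidableRel G.Adj] (α : ℝ) : ℝ :=
  ∑ e ∈ G.edgeFinset,
    Sym2.lift ⟨fun u v => ((G.degree u : ℝ) ^ 2 + (G.degree v : ℝ) ^ 2) ^ (α / 2),
      fun u v => by dsimp only; rw [add_comm]⟩ e

/-- The forgotten index `F(G) = ∑_{uv ∈ E(G)} (d(u)^2 + d(v)^2)`. -/
noncomputable def forgottenIndex [Fintype V] [DecidableEq V] (G : SimpleGraph V)
    [DecidableRel G.Adj] : ℝ :=
  ∑ e ∈ G.edgeFinset,
    Sym2.lift ⟨fun u v => ((G.degree u : ℝ) ^ 2 + (G.degree v : ℝ) ^ 2),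
      fun u v => by dsimp only; rw [add_comm]⟩ e

/-!
For `p < 1` the power `x ^ (p - 1)` is strictly decreasing on the positive reals. Writing
`S ^ p = ∑ x_i * S ^ (p - 1)` with `S = ∑ x_i`, each term is thus less than
`x_i * x_i ^ (p - 1) = x_i ^ p` as soon as there are at least two positive summands. Apply this
with `p = α / 2` to the numbers `d(u)^2 + d(v)^2`, which are positive on the edges `uv`.
-/

section PowerSums

variable {ι : Type*} {s : Finset ι} {f : ι → ℝ} {p : ℝ}

theorem rpow_sum_lt_sum_rpow (hp : p < 1) (hs : s.Nontrivial) (hf : ∀ i ∈ s, 0 < f i) :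
    (∑ i ∈ s, f i) ^ p < ∑ i ∈ s, f i ^ p := by
  have rpow_eq_mul {x : ℝ} (hx : 0 < x) : x ^ p = x * x ^ (p - 1) := by
    rw [Real.rpow_sub_one hx.ne', mul_div_cancel₀ _ hx.ne']
  have lt_sum : ∀ i ∈ s, f i < ∑ j ∈ s, f j := fun i hi => by
    obtain ⟨j, hj, hji⟩ := hs.exists_ne i
    exact single_lt_sum hji hi hj (hf j hj) fun k hk _ => (hf k hk).le
  calc (∑ i ∈ s, f i) ^ p
      = ∑ i ∈ s, f i * (∑ j ∈ s, f j) ^ (p - 1) := by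
        rw [rpow_eq_mul (sum_pos hf hs.nonempty), sum_mul]
    _ < ∑ i ∈ s, f i * f i ^ (p - 1) :=
        sum_lt_sum_of_nonempty hs.nonempty fun i hi =>
          mul_lt_mul_of_pos_left
            (Real.rpow_lt_rpow_of_neg (hf i hi) (lt_sum i hi) (sub_neg.2 hp)) (hf i hi)
    _ = ∑ i ∈ s, f i ^ p := sum_congr rfl fun i hi => (rpow_eq_mul (hf i hi)).symm

theorem sum_rpow_eq_rpow_sum_of_card_le_one (hp : p ≠ 0) (hs : #s ≤ 1) :
    ∑ i ∈ s, f i ^ p = (∑ i ∈ s, f i) ^ p := by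
  obtain h | h := Nat.le_one_iff_eq_zero_or_eq_one.1 hs
  · simp [card_eq_zero.1 h, Real.zero_rpow hp]
  · obtain ⟨i, rfl⟩ := card_eq_one.1 h
    simp

theorem rpow_sum_le_sum_rpow (hp₀ : p ≠ 0) (hp₁ : p < 1) (hf : ∀ i ∈ s, 0 < f i) :
    (∑ i ∈ s, f i) ^ p ≤ ∑ i ∈ s, f i ^ p := by
  obtain hs | hs := le_or_gt #s 1
  · exact (sum_rpow_eq_rpow_sum_of_card_le_one hp₀ hs).ge
  · exact (rpow_sum_lt_sum_rpow hp₁ (one_lt_card_iff_nontrivial.1 hs) hf).le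

theorem sum_rpow_eq_rpow_sum_iff (hp₀ : p ≠ 0) (hp₁ : p < 1) (hf : ∀ i ∈ s, 0 < f i) :
    ∑ i ∈ s, f i ^ p = (∑ i ∈ s, f i) ^ p ↔ #s ≤ 1 := by
  refine ⟨fun heq => ?_, sum_rpow_eq_rpow_sum_of_card_le_one hp₀⟩
  by_contra! hs
  exact (rpow_sum_lt_sum_rpow hp₁ (one_lt_card_iff_nontrivial.1 hs) hf).ne' heq

end PowerSums

/-- The weight `d(u)^2 + d(v)^2` of an unordered pair `s(u, v)`, whose sum over the edges of `G` is
the forgotten index. It is defined on all pairs, adjacent or not. -/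
def sqDegreeSum (G : SimpleGraph V) [G.LocallyFinite] : Sym2 V → ℝ :=
  Sym2.lift ⟨fun u v => (G.degree u : ℝ) ^ 2 + (G.degree v : ℝ) ^ 2, fun _ _ => add_comm _ _⟩

theorem sqDegreeSum_pos (G : SimpleGraph V) [G.LocallyFinite] {e : Sym2 V} (he : e ∈ G.edgeSet) :
    0 < sqDegreeSum G e := by
  induction e with
  | h u v =>
    have hu : (0 : ℝ) < G.degree u := Nat.cast_pos.2 (G.mem_edgeSet.1 he).degree_pos_left
    change 0 < (G.degree u : ℝ) ^ 2 + (G.degree v : ℝ) ^ 2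
    positivity

section Indices

variable [Fintype V] [DecidableEq V] (G : SimpleGraph V) [DecidableRel G.Adj]

theorem forgottenIndex_eq_sum_sqDegreeSum :
    forgottenIndex G = ∑ e ∈ G.edgeFinset, sqDegreeSum G e :=
  rfl

theorem generalSombor_eq_sum_sqDegreeSum_rpow (α : ℝ) :
    generalSombor G α = ∑ e ∈ G.edgeFinset, sqDegreeSum G e ^ (α / 2) :=
  sum_congr rfl fun e _ => e.ind fun _ _ => rfl

theorem generalSombor_ge_forgotten_rpow_general {α : ℝ} (hα₀ : 0 < α) (hα₂ : α < 2) :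
    forgottenIndex G ^ (α / 2) ≤ generalSombor G α ∧
      (generalSombor G α = forgottenIndex G ^ (α / 2) ↔ #G.edgeFinset ≤ 1) := by
  have hp₀ : α / 2 ≠ 0 := (half_pos hα₀).ne'
  have hp₁ : α / 2 < 1 := by linarith
  have weight_pos : ∀ e ∈ G.edgeFinset, 0 < sqDegreeSum G e := fun _ he =>
    sqDegreeSum_pos G (SimpleGraph.mem_edgeFinset.1 he)
  rw [forgottenIndex_eq_sum_sqDegreeSum, generalSombor_eq_sum_sqDegreeSum_rpow]
  exact ⟨rpow_sum_le_sum_rpow hp₀ hp₁ weight_pos, sum_rpow_eq_rpow_sum_iff hp₀ hp₁ weight_pos⟩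

end Indices

theorem generalSombor_ge_forgotten_rpow [Fintype V] [DecidableEq V]
    (G : SimpleGraph V) [DecidableRel G.Adj]
    (hn : 2 ≤ Fintype.card V) (α : ℝ) (hα : 0 < α ∧ α < 1) :
    forgottenIndex G ^ (α / 2) ≤ generalSombor G α ∧
      (generalSombor G α = forgottenIndex G ^ (α / 2) ↔ G.edgeFinset.card ≤ 1) :=
  generalSombor_ge_forgotten_rpow_general G hα.1 (hα.2.trans one_lt_two)
end

section
/- Let G be a finite simple graph on n ≥ 2 vertices and let α be a real number with α > 0. Then SO_α(G) + SO_α(G̅) ≤ 2^{-1+α/2} · n · (n−1)^{α+1}, with equality if and only if G is the complete graph K_n or the empty graph on n vertices. -/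
open Finset

variable {V : Type*}

/-!
Every degree is at most `n - 1`, so each edge of `G` and of `Gᶜ` contributes at most
`(2 (n - 1)²)^(α/2)`, and the two graphs have `n.choose 2` edges in total. Equality forces every
non-isolated vertex of `G` to be universal. If `G` has an edge, its endpoints are then universal,
so no vertex is isolated, and every vertex is universal.
-/

section SqAddSq

variable {a b m p : ℝ}

theorem sq_add_sq_rpow_le (ha : 0 ≤ a) (hb : 0 ≤ b) (ham : a ≤ m) (hbm : b ≤ m) (hp : 0 ≤ p) :
    (a ^ 2 + b ^ 2) ^ p ≤ (2 * m ^ 2) ^ p := by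
  rw [two_mul]
  gcongr

theorem sq_add_sq_rpow_eq_iff (ha : 0 ≤ a) (hb : 0 ≤ b) (ham : a ≤ m) (hbm : b ≤ m) (hp : p ≠ 0) :
    (a ^ 2 + b ^ 2) ^ p = (2 * m ^ 2) ^ p ↔ a = m ∧ b = m := by
  have hm : 0 ≤ m := ha.trans ham
  have ha_sq : a ^ 2 ≤ m ^ 2 := by gcongr
  have hb_sq : b ^ 2 ≤ m ^ 2 := by gcongr
  rw [Real.rpow_left_inj (by positivity) (by positivity) hp, two_mul,
    add_eq_add_iff_eq_and_eq ha_sq hb_sq, pow_left_inj₀ ha hm two_ne_zero,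
    pow_left_inj₀ hb hm two_ne_zero]

theorem two_mul_sq_rpow_half (hm : 0 ≤ m) (α : ℝ) :
    (2 * m ^ 2) ^ (α / 2) = 2 ^ (α / 2) * m ^ α := by
  rw [Real.mul_rpow zero_le_two (sq_nonneg m), ← Real.rpow_natCast_mul hm, Nat.cast_ofNat,
    mul_div_cancel₀ α two_ne_zero]

end SqAddSq

theorem choose_two_mul_two_mul_sq_rpow {n : ℕ} (hn : 2 ≤ n) (α : ℝ) :
    (n.choose 2 : ℝ) * (2 * ((n - 1 : ℕ) : ℝ) ^ 2) ^ (α / 2) =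
      2 ^ (-1 + α / 2) * n * ((n : ℝ) - 1) ^ (α + 1) := by
  have hpos : (0 : ℝ) < n - 1 := sub_pos.2 (mod_cast hn)
  rw [Nat.cast_pred (by lia), two_mul_sq_rpow_half hpos.le, Nat.cast_choose_two,
    Real.rpow_add two_pos, Real.rpow_neg_one, Real.rpow_add_one hpos.ne']
  ring

theorem forall_mem_support_isUniversal_iff {G : SimpleGraph V} :
    (∀ v ∈ G.support, G.IsUniversal v) ↔ G = ⊤ ∨ G = ⊥ := by
  constructor
  · intro huniv
    by_contra! hG
    obtain ⟨u, v, huv⟩ := SimpleGraph.ne_bot_iff_exists_adj.1 hG.2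
    have : Nontrivial V := huv.nontrivial
    have hu : G.IsUniversal u := huniv u ⟨v, huv⟩
    exact hG.1 <| SimpleGraph.eq_top_iff_forall_isUniversal.2 fun w ↦
      huniv w (G.mem_support_iff_not_isIsolated.2 (hu.not_isIsolated w))
  · rintro (rfl | rfl)
    · exact fun _ _ ↦ .top
    · simp

theorem card_edgeFinset_add_card_edgeFinset_compl [Fintype V] [DecidableEq V]
    (G : SimpleGraph V) [DecidableRel G.Adj] :
    #G.edgeFinset + #Gᶜ.edgeFinset = (Fintype.card V).choose 2 := by
  have hdisj : Disjoint G.edgeFinset Gᶜ.edgeFinset :=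
    SimpleGraph.disjoint_edgeFinset.2 disjoint_compl_right
  rw [← card_union_of_disjoint hdisj, ← SimpleGraph.edgeFinset_sup,
    ← SimpleGraph.card_edgeFinset_top_eq_card_choose_two]
  congr!
  exact sup_compl_eq_top

/-- The contribution `(d(u)^2 + d(v)^2)^(α/2)` of the pair `s(u, v)` to the general Sombor index,
defined for all unordered pairs, adjacent or not. -/
noncomputable def somborWeight (G : SimpleGraph V) [G.LocallyFinite] (α : ℝ) : Sym2 V → ℝ :=
  Sym2.lift ⟨fun u v => ((G.degree u : ℝ) ^ 2 + (G.degree v : ℝ) ^ 2) ^ (α / 2),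
    fun u v => by dsimp only; rw [add_comm]⟩

section SomborWeight

variable {G : SimpleGraph V} [G.LocallyFinite] {k : ℕ} {α : ℝ}

theorem somborWeight_le_of_forall_degree_le (hk : ∀ v, G.degree v ≤ k) (hα : 0 ≤ α) (e : Sym2 V) :
    somborWeight G α e ≤ (2 * (k : ℝ) ^ 2) ^ (α / 2) := by
  induction e with
  | _ u v =>
    exact sq_add_sq_rpow_le (by positivity) (by positivity) (mod_cast hk u) (mod_cast hk v)
      (by positivity)

theorem somborWeight_eq_iff_of_forall_degree_le (hk : ∀ v, G.degree v ≤ k) (hα : α ≠ 0)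
    (e : Sym2 V) :
    somborWeight G α e = (2 * (k : ℝ) ^ 2) ^ (α / 2) ↔ ∀ v ∈ e, G.degree v = k := by
  induction e with
  | _ u v =>
    rw [Sym2.ball, ← Nat.cast_inj (R := ℝ), ← Nat.cast_inj (R := ℝ)]
    exact sq_add_sq_rpow_eq_iff (by positivity) (by positivity) (mod_cast hk u) (mod_cast hk v)
      (by positivity)

end SomborWeight

section GeneralSombor

variable [Fintype V] [DecidableEq V] {G : SimpleGraph V} [DecidableRel G.Adj] {k : ℕ} {α : ℝ}

theorem generalSombor_eq_sum_somborWeight :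
    generalSombor G α = ∑ e ∈ G.edgeFinset, somborWeight G α e :=
  rfl

theorem generalSombor_le_of_forall_degree_le (hk : ∀ v, G.degree v ≤ k) (hα : 0 ≤ α) :
    generalSombor G α ≤ #G.edgeFinset * (2 * (k : ℝ) ^ 2) ^ (α / 2) := by
  rw [generalSombor_eq_sum_somborWeight, ← nsmul_eq_mul]
  exact sum_le_card_nsmul _ _ _ fun e _ ↦ somborWeight_le_of_forall_degree_le hk hα e

theorem generalSombor_eq_iff_of_forall_degree_le (hk : ∀ v, G.degree v ≤ k) (hα : 0 < α) :
    generalSombor G α = #G.edgeFinset * (2 * (k : ℝ) ^ 2) ^ (α / 2) ↔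
      ∀ v ∈ G.support, G.degree v = k := by
  rw [generalSombor_eq_sum_somborWeight, ← nsmul_eq_mul, ← sum_const,
    sum_eq_sum_iff_of_le fun e _ ↦ somborWeight_le_of_forall_degree_le hk hα.le e]
  simp only [somborWeight_eq_iff_of_forall_degree_le hk hα.ne', Sym2.forall,
    SimpleGraph.mem_edgeFinset, SimpleGraph.mem_edgeSet, Sym2.ball]
  exact ⟨fun h u ⟨v, huv⟩ ↦ (h u v huv).1, fun h u v huv ↦ ⟨h u ⟨v, huv⟩, h v ⟨u, huv.symm⟩⟩⟩

theorem generalSombor_le_card_edgeFinset_mul (hα : 0 ≤ α) :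
    generalSombor G α ≤ #G.edgeFinset * (2 * ((Fintype.card V - 1 : ℕ) : ℝ) ^ 2) ^ (α / 2) :=
  generalSombor_le_of_forall_degree_le
    (fun v ↦ Nat.le_sub_one_of_lt (G.degree_lt_card_verts v)) hα

theorem generalSombor_eq_iff_eq_top_or_eq_bot (hα : 0 < α) :
    generalSombor G α = #G.edgeFinset * (2 * ((Fintype.card V - 1 : ℕ) : ℝ) ^ 2) ^ (α / 2) ↔
      G = ⊤ ∨ G = ⊥ := by
  rw [generalSombor_eq_iff_of_forall_degree_le
    (fun v ↦ Nat.le_sub_one_of_lt (G.degree_lt_card_verts v)) hα]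
  simp only [SimpleGraph.degree_eq_card_sub_one, forall_mem_support_isUniversal_iff]

end GeneralSombor

theorem nordhaus_gaddum_upper_of_pos [Fintype V] [DecidableEq V]
    (G : SimpleGraph V) [DecidableRel G.Adj]
    (hn : 2 ≤ Fintype.card V) (α : ℝ) (hα : 0 < α) :
    generalSombor G α + generalSombor Gᶜ α ≤
        (2 : ℝ) ^ (-1 + α / 2) * (Fintype.card V : ℝ) * ((Fintype.card V : ℝ) - 1) ^ (α + 1) ∧
      (generalSombor G α + generalSombor Gᶜ α =
          (2 : ℝ) ^ (-1 + α / 2) * (Fintype.card V : ℝ) * ((Fintype.card V : ℝ) - 1) ^ (α + 1) ↔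
        G = ⊤ ∨ G = ⊥) := by
  have hG := generalSombor_le_card_edgeFinset_mul (G := G) hα.le
  have hGc := generalSombor_le_card_edgeFinset_mul (G := Gᶜ) hα.le
  rw [← choose_two_mul_two_mul_sq_rpow hn α, ← card_edgeFinset_add_card_edgeFinset_compl G,
    Nat.cast_add, add_mul]
  refine ⟨add_le_add hG hGc, ?_⟩
  rw [add_eq_add_iff_eq_and_eq hG hGc, generalSombor_eq_iff_eq_top_or_eq_bot hα,
    generalSombor_eq_iff_eq_top_or_eq_bot hα, compl_eq_top, compl_eq_bot, or_comm (a := G = ⊥),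
    and_self]
end
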